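/- arXiv:1404.4647 — 2 statements merged into one kernel-verified Lean document; each statement's English description precedes it below -/
import Mathlib

section
/- Let Ω be the standard symplectic form on ℂ^{2n}, let 0 < k ≤ n, and fix the standard isotropic subspace ℂ^k ⊂ ℂ^{2n}. The variety Γ = {V ∈ IG(k, 2n) : dim(ℂ^k ∩ V) ≥ k−1 and dim(ℂ^k + V) ≤ k+1} has complex dimension 2n − k. -/
/-!
STATEMENT 9: With Ω the standard symplectic form on ℂ^{2n}, 0 < k ≤ n, and
ℂ^k ⊂ ℂ^{2n} the standard isotropic subspace (spanned by the first k standard basis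
vectors among the z-coordinates), the variety
Γ = {V ∈ IG(k,2n) : dim(ℂ^k ∩ V) ≥ k−1 and dim(ℂ^k + V) ≤ k+1}
has complex dimension 2n − k.

As in the projection-operator model of the Grassmannian, "complex dimension d" is
expressed as Hausdorff dimension 2d = 2(2n − k).
-/

open Module

noncomputable section

variable (n : ℕ)

abbrev CSp (n : ℕ) := EuclideanSpace ℂ (Fin n ⊕ Fin n)

/-- The standard complex symplectic form `Ω = Σ dzᵢ ∧ dwᵢ` on ℂ^{2n}. -/
def stdSymplForm (x y : CSp n) : ℂ :=
  ∑ i : Fin n, (x (Sum.inl i) * y (Sum.inr i) - x (Sum.inr i) * y (Sum.inl i))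

/-- A subspace is Ω-isotropic if Ω vanishes identically on it. -/
def IsOmegaIsotropic (V : Submodule ℂ (CSp n)) : Prop :=
  ∀ x ∈ V, ∀ y ∈ V, stdSymplForm n x y = 0

/-- The standard isotropic subspace ℂ^k ⊂ ℂ^{2n}. -/
def stdCk (k : ℕ) (hkn : k ≤ n) : Submodule ℂ (CSp n) :=
  Submodule.span ℂ
    (Set.range fun i : Fin k => EuclideanSpace.single (Sum.inl (Fin.castLE hkn i)) (1 : ℂ))

/-- The projection-operator model of the curve neighborhood
`Γ = {V ∈ IG(k,2n) : dim(ℂ^k ∩ V) ≥ k−1, dim(ℂ^k + V) ≤ k+1}`. -/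
def GammaIG (k : ℕ) (hkn : k ≤ n) : Set (CSp n →L[ℂ] CSp n) :=
  {P | P.comp P = P ∧ ContinuousLinearMap.adjoint P = P ∧
    finrank ℂ (LinearMap.range (P : CSp n →ₗ[ℂ] CSp n)) = k ∧
    IsOmegaIsotropic n (LinearMap.range (P : CSp n →ₗ[ℂ] CSp n)) ∧
    k - 1 ≤ finrank ℂ ↥(stdCk n k hkn ⊓ LinearMap.range (P : CSp n →ₗ[ℂ] CSp n)) ∧
    finrank ℂ ↥(stdCk n k hkn ⊔ LinearMap.range (P : CSp n →ₗ[ℂ] CSp n)) ≤ k + 1}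

section GenericFrames

set_option linter.unusedSectionVars false

variable {K E : Type*} [NormedAddCommGroup K] [InnerProductSpace ℂ K] [FiniteDimensional ℂ K]
  [NormedAddCommGroup E] [InnerProductSpace ℂ E] [FiniteDimensional ℂ E]
  [CompleteSpace K] [CompleteSpace E]

/-- Orthogonal projection onto the range of an injective map. -/
def frameProj (A : K →L[ℂ] E) : E →L[ℂ] E :=
  A.comp ((Ring.inverse ((ContinuousLinearMap.adjoint A).comp A)).comp
    (ContinuousLinearMap.adjoint A))

theorem gram_isUnit (A : K →L[ℂ] E) (hA : Function.Injective A) :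
    IsUnit ((ContinuousLinearMap.adjoint A).comp A) := by
  rw [ContinuousLinearMap.isUnit_iff_bijective]
  have hinj : Function.Injective ((ContinuousLinearMap.adjoint A).comp A) := by
    rw [injective_iff_map_eq_zero]
    intro x hx
    have h1 : inner ℂ (A x) (A x) = 0 := by
      rw [← ContinuousLinearMap.adjoint_inner_left]
      have : ContinuousLinearMap.adjoint A (A x) = 0 := hx
      rw [this, inner_zero_left]
    rw [inner_self_eq_zero] at h1
    exact hA (by rw [h1, map_zero])
  refine ⟨hinj, ?_⟩
  exact (LinearMap.injective_iff_surjective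
    (f := (((ContinuousLinearMap.adjoint A).comp A : K →L[ℂ] K) : K →ₗ[ℂ] K))).1 hinj

theorem frameProj_comp_self (A : K →L[ℂ] E) (hA : Function.Injective A) :
    (frameProj A).comp A = A := by
  have h := Ring.inverse_mul_cancel _ (gram_isUnit A hA)
  ext x
  have h2 := congrArg (fun f : K →L[ℂ] K => A (f x)) h
  simpa [frameProj] using h2

theorem frameProj_range (A : K →L[ℂ] E) (hA : Function.Injective A) :
    LinearMap.range (frameProj A : E →ₗ[ℂ] E) = LinearMap.range (A : K →ₗ[ℂ] E) := by
  apply le_antisymm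
  · rintro _ ⟨x, rfl⟩
    exact ⟨_, rfl⟩
  · rintro _ ⟨x, rfl⟩
    exact ⟨A x, congrArg (fun f : K →L[ℂ] E => f x) (frameProj_comp_self A hA)⟩

theorem frameProj_idem (A : K →L[ℂ] E) (hA : Function.Injective A) :
    (frameProj A).comp (frameProj A) = frameProj A := by
  ext x
  exact congrArg (fun f : K →L[ℂ] E => f ((Ring.inverse ((ContinuousLinearMap.adjoint A).comp A))
    (ContinuousLinearMap.adjoint A x))) (frameProj_comp_self A hA)

theorem frameProj_adjoint (A : K →L[ℂ] E) (hA : Function.Injective A) :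
    ContinuousLinearMap.adjoint (frameProj A) = frameProj A := by
  have hG := gram_isUnit A hA
  have hs : star (Ring.inverse ((ContinuousLinearMap.adjoint A).comp A)) =
      Ring.inverse ((ContinuousLinearMap.adjoint A).comp A) := by
    rw [← Ring.inverse_star]
    congr 1
    rw [ContinuousLinearMap.star_eq_adjoint, ContinuousLinearMap.adjoint_comp,
      ContinuousLinearMap.adjoint_adjoint]
  rw [ContinuousLinearMap.star_eq_adjoint] at hs
  rw [frameProj, ContinuousLinearMap.adjoint_comp, ContinuousLinearMap.adjoint_comp, hs,
    ContinuousLinearMap.adjoint_adjoint, ContinuousLinearMap.comp_assoc]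

theorem comp_eq_of_range (P Q : E →L[ℂ] E) (hP : P.comp P = P)
    (h : LinearMap.range (Q : E →ₗ[ℂ] E) ≤ LinearMap.range (P : E →ₗ[ℂ] E)) :
    P.comp Q = Q := by
  ext x
  obtain ⟨y, hy⟩ := h ⟨x, rfl⟩
  have hy' : P y = Q x := hy
  have := congrArg (fun f : E →L[ℂ] E => f y) hP
  simp only [ContinuousLinearMap.comp_apply] at this ⊢
  rw [← hy', this]

theorem eq_frameProj (A : K →L[ℂ] E) (hA : Function.Injective A) (P : E →L[ℂ] E)
    (hP : P.comp P = P) (hP' : ContinuousLinearMap.adjoint P = P)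
    (h : LinearMap.range (P : E →ₗ[ℂ] E) = LinearMap.range (A : K →ₗ[ℂ] E)) :
    P = frameProj A := by
  have h1 := comp_eq_of_range P (frameProj A) hP (by rw [frameProj_range A hA, h])
  have h2 := comp_eq_of_range (frameProj A) P (frameProj_idem A hA)
    (by rw [frameProj_range A hA, h])
  have h3 := congrArg ContinuousLinearMap.adjoint h2
  rw [ContinuousLinearMap.adjoint_comp, hP', frameProj_adjoint A hA, h1] at h3
  exact h3.symm

theorem contDiff_adjoint_real :
    ContDiff ℝ 1 (fun A : K →L[ℂ] E => ContinuousLinearMap.adjoint A) := by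
  have h : IsBoundedLinearMap ℝ (fun A : K →L[ℂ] E => ContinuousLinearMap.adjoint A) := by
    refine ⟨⟨fun x y => map_add _ x y, fun c x => ?_⟩, 1, one_pos, fun x => ?_⟩
    · have : c • x = (c : ℂ) • x := rfl
      rw [this, map_smulₛₗ]
      simp
    · simp
  exact h.contDiff

theorem contDiffAt_frameProj (A : K →L[ℂ] E) (hA : Function.Injective A) :
    ContDiffAt ℝ 1 (fun A : K →L[ℂ] E => frameProj A) A := by
  have hadj : ContDiffAt ℝ 1 (fun A : K →L[ℂ] E => ContinuousLinearMap.adjoint A) A :=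
    contDiff_adjoint_real.contDiffAt
  have hc1 : ContDiff ℝ 1 (fun p : (E →L[ℂ] K) × (K →L[ℂ] E) => p.1.comp p.2) :=
    (isBoundedBilinearMap_comp (𝕜 := ℂ)).contDiff.restrict_scalars ℝ
  have hc2 : ContDiff ℝ 1 (fun p : (K →L[ℂ] K) × (E →L[ℂ] K) => p.1.comp p.2) :=
    (isBoundedBilinearMap_comp (𝕜 := ℂ)).contDiff.restrict_scalars ℝ
  have hc3 : ContDiff ℝ 1 (fun p : (K →L[ℂ] E) × (E →L[ℂ] K) => p.1.comp p.2) :=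
    (isBoundedBilinearMap_comp (𝕜 := ℂ)).contDiff.restrict_scalars ℝ
  have hgram : ContDiffAt ℝ 1
      (fun A : K →L[ℂ] E => (ContinuousLinearMap.adjoint A).comp A) A :=
    hc1.contDiffAt.comp A (hadj.prodMk contDiffAt_id)
  obtain ⟨u, hu⟩ := gram_isUnit A hA
  have hinv0 : ContDiffAt ℝ 1 (Ring.inverse : (K →L[ℂ] K) → (K →L[ℂ] K))
      ((ContinuousLinearMap.adjoint A).comp A) := by
    rw [← hu]; exact contDiffAt_ringInverse ℝ u
  have hinv : ContDiffAt ℝ 1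
      (fun A : K →L[ℂ] E => Ring.inverse ((ContinuousLinearMap.adjoint A).comp A)) A :=
    ContDiffAt.comp (g := Ring.inverse)
      (f := fun A : K →L[ℂ] E => (ContinuousLinearMap.adjoint A).comp A) A hinv0 hgram
  exact hc3.contDiffAt.comp A (contDiffAt_id.prodMk (hc2.contDiffAt.comp A (hinv.prodMk hadj)))

/-- Recover the frame `A` normalised by `B† A = 1` from its projection. -/
def frameRec (B : K →L[ℂ] E) (P : E →L[ℂ] E) : K →L[ℂ] E :=
  (P.comp B).comp (Ring.inverse ((ContinuousLinearMap.adjoint B).comp (P.comp B)))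

theorem frameRec_aux (A B : K →L[ℂ] E)
    (hB : (ContinuousLinearMap.adjoint B).comp A = ContinuousLinearMap.id ℂ K) :
    (frameProj A).comp B = A.comp (Ring.inverse ((ContinuousLinearMap.adjoint A).comp A)) := by
  have h := congrArg ContinuousLinearMap.adjoint hB
  rw [ContinuousLinearMap.adjoint_comp, ContinuousLinearMap.adjoint_adjoint,
    ContinuousLinearMap.adjoint_id] at h
  rw [frameProj, ContinuousLinearMap.comp_assoc, ContinuousLinearMap.comp_assoc, h]
  rfl

theorem frameRec_aux2 (A B : K →L[ℂ] E)
    (hB : (ContinuousLinearMap.adjoint B).comp A = ContinuousLinearMap.id ℂ K) :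
    (ContinuousLinearMap.adjoint B).comp ((frameProj A).comp B) =
      (Ring.inverse ((ContinuousLinearMap.adjoint A).comp A)) := by
  rw [frameRec_aux A B hB, ← ContinuousLinearMap.comp_assoc, hB]
  rfl

theorem isUnit_frameRec (A B : K →L[ℂ] E) (hA : Function.Injective A)
    (hB : (ContinuousLinearMap.adjoint B).comp A = ContinuousLinearMap.id ℂ K) :
    IsUnit ((ContinuousLinearMap.adjoint B).comp ((frameProj A).comp B)) := by
  rw [frameRec_aux2 A B hB]
  obtain ⟨u, hu⟩ := gram_isUnit A hA
  rw [← hu, Ring.inverse_unit]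
  exact u⁻¹.isUnit

theorem frameRec_frameProj (A B : K →L[ℂ] E) (hA : Function.Injective A)
    (hB : (ContinuousLinearMap.adjoint B).comp A = ContinuousLinearMap.id ℂ K) :
    frameRec B (frameProj A) = A := by
  rw [frameRec, frameRec_aux2 A B hB, frameRec_aux A B hB]
  obtain ⟨u, hu⟩ := gram_isUnit A hA
  rw [← hu, Ring.inverse_unit, Ring.inverse_unit, inv_inv, ContinuousLinearMap.comp_assoc]
  have : ((u⁻¹ : (K →L[ℂ] K)ˣ) : K →L[ℂ] K).comp (u : K →L[ℂ] K) = 1 := u.inv_mul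
  rw [this]
  rfl

theorem contDiffAt_frameRec (B : K →L[ℂ] E) (P : E →L[ℂ] E)
    (h : IsUnit ((ContinuousLinearMap.adjoint B).comp (P.comp B))) :
    ContDiffAt ℝ 1 (fun P : E →L[ℂ] E => frameRec B P) P := by
  have hc1 : ContDiff ℂ 1 (fun p : (E →L[ℂ] E) × (K →L[ℂ] E) => p.1.comp p.2) :=
    (isBoundedBilinearMap_comp (𝕜 := ℂ)).contDiff
  have hc2 : ContDiff ℂ 1 (fun p : (E →L[ℂ] K) × (K →L[ℂ] E) => p.1.comp p.2) :=
    (isBoundedBilinearMap_comp (𝕜 := ℂ)).contDiff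
  have hc3 : ContDiff ℂ 1 (fun p : (K →L[ℂ] E) × (K →L[ℂ] K) => p.1.comp p.2) :=
    (isBoundedBilinearMap_comp (𝕜 := ℂ)).contDiff
  have h1 : ContDiffAt ℂ 1 (fun P : E →L[ℂ] E => P.comp B) P :=
    hc1.contDiffAt.comp P (contDiffAt_id.prodMk contDiffAt_const)
  have h2 : ContDiffAt ℂ 1
      (fun P : E →L[ℂ] E => (ContinuousLinearMap.adjoint B).comp (P.comp B)) P :=
    hc2.contDiffAt.comp P (contDiffAt_const.prodMk h1)
  obtain ⟨u, hu⟩ := h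
  have hinv0 : ContDiffAt ℂ 1 (Ring.inverse : (K →L[ℂ] K) → (K →L[ℂ] K))
      ((ContinuousLinearMap.adjoint B).comp (P.comp B)) := by
    rw [← hu]; exact contDiffAt_ringInverse ℂ u
  have h3 := hinv0.comp P h2
  exact (hc3.contDiffAt.comp P (h1.prodMk h3)).restrict_scalars ℝ

end GenericFrames

section Concrete

variable {n}

/-- Inclusion of indices. -/
def ixi {k : ℕ} (hkn : k ≤ n) (j : Fin k) : Fin n := Fin.castLE hkn j

theorem ixi_inj {k : ℕ} (hkn : k ≤ n) {j j' : Fin k} : ixi hkn j = ixi hkn j' ↔ j = j' := by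
  simp [ixi]

/-- indices `< k` and different from `i`. -/
def Bad {k : ℕ} (i : Fin k) (l : Fin n) : Prop := (l : ℕ) < k ∧ (l : ℕ) ≠ (i : ℕ)

instance {k : ℕ} (i : Fin k) (l : Fin n) : Decidable (Bad i l) := by unfold Bad; infer_instance

theorem bad_ixi {k : ℕ} (hkn : k ≤ n) (i j : Fin k) : Bad i (ixi hkn j) ↔ j ≠ i := by
  simp [Bad, ixi, Fin.ext_iff]

theorem bad_exists {k : ℕ} (hkn : k ≤ n) (i : Fin k) (l : Fin n) (h : Bad i l) :
    ∃ j, j ≠ i ∧ l = ixi hkn j :=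
  ⟨⟨l, h.1⟩, by simpa [Fin.ext_iff] using h.2, by simp [ixi, Fin.ext_iff]⟩

/-- last frame vector -/
def vvec {k : ℕ} (hkn : k ≤ n) (i : Fin k) (p : Fin n ⊕ Fin n → ℂ) : CSp n :=
  WithLp.toLp 2 (Sum.elim (fun l => if Bad i l then 0 else p (Sum.inl l))
    (fun l => if Bad i l then -(p (Sum.inl l) * p (Sum.inr (ixi hkn i))) else p (Sum.inr l)))

/-- frame vectors in `ℂ^k` -/
def uvec {k : ℕ} (hkn : k ≤ n) (i : Fin k) (p : Fin n ⊕ Fin n → ℂ) (j : Fin k) : CSp n :=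
  EuclideanSpace.single (Sum.inl (ixi hkn j)) 1 +
    p (Sum.inl (ixi hkn j)) • EuclideanSpace.single (Sum.inl (ixi hkn i)) 1

/-- the whole frame -/
def cols {k : ℕ} (hkn : k ≤ n) (i : Fin k) (p : Fin n ⊕ Fin n → ℂ) (j : Fin k) : CSp n :=
  if j = i then vvec hkn i p else uvec hkn i p j

/-- linear map with prescribed columns -/
def frame {k : ℕ} (f : Fin k → CSp n) : EuclideanSpace ℂ (Fin k) →L[ℂ] CSp n :=
  ∑ j, (EuclideanSpace.proj j : EuclideanSpace ℂ (Fin k) →L[ℂ] ℂ).smulRight (f j)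

theorem frame_apply {k : ℕ} (f : Fin k → CSp n) (y : EuclideanSpace ℂ (Fin k)) :
    frame f y = ∑ j, y j • f j := by
  simp [frame]

theorem frame_single {k : ℕ} (f : Fin k → CSp n) (j : Fin k) :
    frame f (EuclideanSpace.single j 1) = f j := by
  simp [frame_apply, Finset.sum_ite_eq']

theorem frame_range {k : ℕ} (f : Fin k → CSp n) :
    LinearMap.range (frame f : EuclideanSpace ℂ (Fin k) →ₗ[ℂ] CSp n) =
      Submodule.span ℂ (Set.range f) := by
  apply le_antisymm
  · rintro _ ⟨y, rfl⟩
    show frame f y ∈ _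
    rw [frame_apply]
    exact Submodule.sum_mem _ fun j _ =>
      Submodule.smul_mem _ _ (Submodule.subset_span ⟨j, rfl⟩)
  · rw [Submodule.span_le]
    rintro _ ⟨j, rfl⟩
    exact ⟨_, frame_single f j⟩

theorem cols_inl {k : ℕ} (hkn : k ≤ n) (i : Fin k) (p : Fin n ⊕ Fin n → ℂ) (j j' : Fin k)
    (hj : j ≠ i) : cols hkn i p j' (Sum.inl (ixi hkn j)) = if j' = j then 1 else 0 := by
  unfold cols
  split_ifs with h1 h2 h2
  · exact absurd (h2.symm.trans h1) hj
  · simp [vvec, bad_ixi, hj]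
  · subst h2; simp [uvec, ixi_inj, hj, Pi.single_apply]
  · simp [uvec, ixi_inj, hj, Ne.symm h2, Pi.single_apply]

theorem frame_inl {k : ℕ} (hkn : k ≤ n) (i : Fin k) (p : Fin n ⊕ Fin n → ℂ) (j : Fin k)
    (hj : j ≠ i) (y : EuclideanSpace ℂ (Fin k)) :
    frame (cols hkn i p) y (Sum.inl (ixi hkn j)) = y j := by
  simp [frame_apply, cols_inl hkn i p j _ hj]

theorem vvec_good {k : ℕ} (hkn : k ≤ n) (i : Fin k) (p : Fin n ⊕ Fin n → ℂ)
    (m : Fin n ⊕ Fin n) (hm : ¬ Bad i (Sum.elim id id m)) : vvec hkn i p m = p m := by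
  rcases m with m | m <;> simp_all [vvec]

theorem frame_injective {k : ℕ} (hkn : k ≤ n) (i : Fin k) (p : Fin n ⊕ Fin n → ℂ)
    (m : Fin n ⊕ Fin n) (hm : ¬ Bad i (Sum.elim id id m)) (hp : p m ≠ 0) :
    Function.Injective (frame (cols hkn i p)) := by
  rw [injective_iff_map_eq_zero]
  intro y hy
  have h1 : ∀ j, j ≠ i → y j = 0 := fun j hj => by
    rw [← frame_inl hkn i p j hj y, hy]; rfl
  have h2 : frame (cols hkn i p) y = y i • vvec hkn i p := by
    rw [frame_apply, Finset.sum_eq_single i]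
    · simp [cols]
    · intro j _ hj
      simp [h1 j hj]
    · simp
  have h3 : y i * p m = 0 := by
    have := congrArg (fun v : CSp n => v m) (h2.symm.trans hy)
    simpa [vvec_good hkn i p m hm] using this
  ext j
  by_cases hj : j = i
  · subst hj
    simpa [hp] using h3
  · exact h1 j hj

theorem uvec_mem {k : ℕ} (hkn : k ≤ n) (i : Fin k) (p : Fin n ⊕ Fin n → ℂ) (j : Fin k) :
    uvec hkn i p j ∈ stdCk n k hkn :=
  Submodule.add_mem _ (Submodule.subset_span ⟨j, rfl⟩)
    (Submodule.smul_mem _ _ (Submodule.subset_span ⟨i, rfl⟩))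

/-- Bundled form. -/
def OmegaB (n : ℕ) : CSp n →ₗ[ℂ] CSp n →ₗ[ℂ] ℂ :=
  LinearMap.mk₂ ℂ (stdSymplForm n)
    (by intro a b c; simp only [stdSymplForm, ← Finset.sum_add_distrib]
        exact Finset.sum_congr rfl fun i _ => by simp only [PiLp.add_apply]; ring)
    (by intro a b c; simp only [stdSymplForm, smul_eq_mul, Finset.mul_sum]
        exact Finset.sum_congr rfl fun i _ => by simp only [PiLp.smul_apply, smul_eq_mul]; ring)
    (by intro a b c; simp only [stdSymplForm, ← Finset.sum_add_distrib]
        exact Finset.sum_congr rfl fun i _ => by simp only [PiLp.add_apply]; ring)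
    (by intro a b c; simp only [stdSymplForm, smul_eq_mul, Finset.mul_sum]
        exact Finset.sum_congr rfl fun i _ => by simp only [PiLp.smul_apply, smul_eq_mul]; ring)

theorem omega_single {l : Fin n} (v : CSp n) :
    OmegaB n (EuclideanSpace.single (Sum.inl l) 1) v = v (Sum.inr l) := by
  simp [OmegaB, stdSymplForm, Pi.single_apply]

theorem omega_uvec {k : ℕ} (hkn : k ≤ n) (i : Fin k) (p : Fin n ⊕ Fin n → ℂ) (j : Fin k)
    (v : CSp n) : OmegaB n (uvec hkn i p j) v =
      v (Sum.inr (ixi hkn j)) + p (Sum.inl (ixi hkn j)) * v (Sum.inr (ixi hkn i)) := by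
  simp [uvec, omega_single]

theorem omega_self (v : CSp n) : OmegaB n v v = 0 := by
  simp [OmegaB, stdSymplForm, mul_comm]

theorem omega_swap (v w : CSp n) : OmegaB n v w = - OmegaB n w v := by
  simp only [OmegaB, stdSymplForm, LinearMap.mk₂_apply, ← Finset.sum_neg_distrib]
  exact Finset.sum_congr rfl fun i _ => by ring

theorem omega_u_v {k : ℕ} (hkn : k ≤ n) (i : Fin k) (p : Fin n ⊕ Fin n → ℂ) (j : Fin k)
    (hj : j ≠ i) : OmegaB n (uvec hkn i p j) (vvec hkn i p) = 0 := by
  rw [omega_uvec]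
  simp [vvec, bad_ixi, hj]

theorem omega_u_u {k : ℕ} (hkn : k ≤ n) (i : Fin k) (p : Fin n ⊕ Fin n → ℂ) (j j' : Fin k) :
    OmegaB n (uvec hkn i p j) (uvec hkn i p j') = 0 := by
  rw [omega_uvec]
  simp [uvec]

theorem omega_cols {k : ℕ} (hkn : k ≤ n) (i : Fin k) (p : Fin n ⊕ Fin n → ℂ) (j j' : Fin k) :
    OmegaB n (cols hkn i p j) (cols hkn i p j') = 0 := by
  unfold cols
  split_ifs with h1 h2 h2
  · exact omega_self _
  · rw [omega_swap, omega_u_v hkn i p j' h2, neg_zero]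
  · exact omega_u_v hkn i p j h1
  · exact omega_u_u hkn i p j j'

theorem finrank_stdCk_le {k : ℕ} (hkn : k ≤ n) : finrank ℂ (stdCk n k hkn) ≤ k := by
  have := finrank_range_le_card (R := ℂ)
    (fun i : Fin k => (EuclideanSpace.single (Sum.inl (Fin.castLE hkn i)) (1 : ℂ) : CSp n))
  rw [Fintype.card_fin] at this
  exact this

theorem frame_mem_Gamma {k : ℕ} (hkn : k ≤ n) (i : Fin k) (p : Fin n ⊕ Fin n → ℂ)
    (m : Fin n ⊕ Fin n) (hm : ¬ Bad i (Sum.elim id id m)) (hp : p m ≠ 0) :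
    frameProj (frame (cols hkn i p)) ∈ GammaIG n k hkn := by
  have hA := frame_injective hkn i p m hm hp
  have hr := frameProj_range _ hA
  have hrank : finrank ℂ (LinearMap.range
      (frame (cols hkn i p) : EuclideanSpace ℂ (Fin k) →ₗ[ℂ] CSp n)) = k := by
    rw [LinearMap.finrank_range_of_inj hA]; simp
  have hinf : k - 1 ≤ finrank ℂ ↥(stdCk n k hkn ⊓ LinearMap.range
      (frame (cols hkn i p) : EuclideanSpace ℂ (Fin k) →ₗ[ℂ] CSp n)) := by
    have hle : LinearMap.range
        (frame (cols hkn i p) : EuclideanSpace ℂ (Fin k) →ₗ[ℂ] CSp n) ≤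
        (stdCk n k hkn ⊓ LinearMap.range
        (frame (cols hkn i p) : EuclideanSpace ℂ (Fin k) →ₗ[ℂ] CSp n)) ⊔
          Submodule.span ℂ {vvec hkn i p} := by
      conv_lhs => rw [frame_range]
      rw [Submodule.span_le]
      rintro _ ⟨j, rfl⟩
      by_cases hj : j = i
      · apply Submodule.mem_sup_right
        simpa [cols, hj] using Submodule.mem_span_singleton_self (vvec hkn i p)
      · apply Submodule.mem_sup_left
        refine ⟨by simpa [cols, hj] using uvec_mem hkn i p j, ⟨_, frame_single _ j⟩⟩
    have h1 := Submodule.finrank_mono hle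
    have h2 := Submodule.finrank_add_le_finrank_add_finrank (stdCk n k hkn ⊓ LinearMap.range
        (frame (cols hkn i p) : EuclideanSpace ℂ (Fin k) →ₗ[ℂ] CSp n))
          (Submodule.span ℂ {vvec hkn i p})
    have h3 := finrank_span_le_card (R := ℂ) ({vvec hkn i p} : Set (CSp n))
    simp only [Set.toFinset_singleton, Finset.card_singleton] at h3
    omega
  refine ⟨frameProj_idem _ hA, frameProj_adjoint _ hA, ?_, ?_, ?_, ?_⟩
  · rw [hr, hrank]
  · rw [hr]
    rintro _ ⟨y, rfl⟩ _ ⟨y', rfl⟩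
    show OmegaB n (frame (cols hkn i p) y) (frame (cols hkn i p) y') = 0
    simp [frame_apply, omega_cols]
  · rw [hr]; exact hinf
  · rw [hr]
    have h1 := Submodule.finrank_sup_add_finrank_inf_eq (stdCk n k hkn) (LinearMap.range
      (frame (cols hkn i p) : EuclideanSpace ℂ (Fin k) →ₗ[ℂ] CSp n))
    have h2 := finrank_stdCk_le hkn
    omega

theorem finrank_stdCk {k : ℕ} (hkn : k ≤ n) : finrank ℂ (stdCk n k hkn) = k := by
  have hli : LinearIndependent ℂ
      (fun i : Fin k => (EuclideanSpace.single (Sum.inl (Fin.castLE hkn i)) (1 : ℂ) : CSp n)) := by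
    have h := (EuclideanSpace.basisFun (Fin n ⊕ Fin n) ℂ).toBasis.linearIndependent
    have h2 := h.comp (fun i : Fin k => Sum.inl (Fin.castLE hkn i))
      (fun a b hab => by simpa using hab)
    have he : (fun i : Fin k =>
        (EuclideanSpace.single (Sum.inl (Fin.castLE hkn i)) (1 : ℂ) : CSp n)) =
        (EuclideanSpace.basisFun (Fin n ⊕ Fin n) ℂ).toBasis ∘
          fun i : Fin k => Sum.inl (Fin.castLE hkn i) := by
      funext i
      simp
    rw [he]
    exact h2
  have := finrank_span_eq_card hli
  rw [Fintype.card_fin] at this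
  exact this

theorem exists_cols1 {k : ℕ} (hk : 0 < k) (hkn : k ≤ n) (V : Submodule ℂ (CSp n))
    (h : k - 1 ≤ finrank ℂ ↥(stdCk n k hkn ⊓ V)) :
    ∃ (i : Fin k) (a : Fin n ⊕ Fin n → ℂ), ∀ j, j ≠ i → uvec hkn i a j ∈ V := by
  by_cases hall : ∀ j : Fin k, (EuclideanSpace.single (Sum.inl (ixi hkn j)) (1 : ℂ) : CSp n) ∈ V
  · refine ⟨⟨0, hk⟩, 0, fun j _ => ?_⟩
    simpa [uvec] using hall j
  push Not at hall
  obtain ⟨i, hi⟩ := hall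
  set ei : CSp n := EuclideanSpace.single (Sum.inl (ixi hkn i)) (1 : ℂ) with hei
  have heiC : ei ∈ stdCk n k hkn := Submodule.subset_span ⟨i, rfl⟩
  have hle : (stdCk n k hkn ⊓ V) ⊔ Submodule.span ℂ {ei} ≤ stdCk n k hkn := by
    refine sup_le inf_le_left ?_
    rw [Submodule.span_le]
    simpa using heiC
  have hlt : (stdCk n k hkn ⊓ V) < (stdCk n k hkn ⊓ V) ⊔ Submodule.span ℂ {ei} := by
    refine lt_of_le_of_ne le_sup_left fun heq => hi ?_
    have : ei ∈ (stdCk n k hkn ⊓ V) ⊔ Submodule.span ℂ {ei} :=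
      Submodule.mem_sup_right (Submodule.mem_span_singleton_self ei)
    rw [← heq] at this
    exact this.2
  have h1 := Submodule.finrank_lt_finrank_of_lt hlt
  have heq := Submodule.eq_of_le_of_finrank_le hle (by rw [finrank_stdCk]; omega)
  have hex : ∀ j : Fin k, ∃ c : ℂ,
      (EuclideanSpace.single (Sum.inl (ixi hkn j)) (1 : ℂ) : CSp n) + c • ei ∈ V := by
    intro j
    have hj : (EuclideanSpace.single (Sum.inl (ixi hkn j)) (1 : ℂ) : CSp n) ∈ stdCk n k hkn :=
      Submodule.subset_span ⟨j, rfl⟩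
    rw [← heq, Submodule.mem_sup] at hj
    obtain ⟨w, hw, z, hz, hwz⟩ := hj
    obtain ⟨c, rfl⟩ := Submodule.mem_span_singleton.1 hz
    refine ⟨-c, ?_⟩
    rw [← hwz]
    simpa using hw.2
  choose c hc using hex
  refine ⟨i, Sum.elim (fun l => if hl : (l : ℕ) < k then c ⟨l, hl⟩ else 0) 0, fun j _ => ?_⟩
  simpa [uvec, ixi, hei] using hc j

theorem uvec_congr {k : ℕ} (hkn : k ≤ n) (i : Fin k) (p q : Fin n ⊕ Fin n → ℂ) (j : Fin k)
    (h : p (Sum.inl (ixi hkn j)) = q (Sum.inl (ixi hkn j))) :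
    uvec hkn i p j = uvec hkn i q j := by
  simp [uvec, h]

theorem exists_cols2 {k : ℕ} (hk : 0 < k) (hkn : k ≤ n) (V : Submodule ℂ (CSp n))
    (hV : finrank ℂ V = k) (hiso : IsOmegaIsotropic n V)
    (h : k - 1 ≤ finrank ℂ ↥(stdCk n k hkn ⊓ V)) :
    ∃ (i : Fin k) (m : Fin n ⊕ Fin n) (p : Fin n ⊕ Fin n → ℂ),
      ¬ Bad i (Sum.elim id id m) ∧ p m = 1 ∧ (∀ l, Bad i l → p (Sum.inr l) = 0) ∧
      ∀ j, cols hkn i p j ∈ V := by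
  obtain ⟨i, a, ha⟩ := exists_cols1 hk hkn V h
  -- a vector outside of the span of the `u`s
  have hlt : finrank ℂ (Submodule.span ℂ
      (((Finset.univ.erase i).image (uvec hkn i a) : Finset (CSp n)) : Set (CSp n))) < k := by
    have h1 := finrank_span_finset_le_card (R := ℂ) ((Finset.univ.erase i).image (uvec hkn i a))
    have h2 := Finset.card_image_le (s := Finset.univ.erase i) (f := uvec hkn i a)
    rw [Finset.card_erase_of_mem (Finset.mem_univ i), Finset.card_fin] at h2
    simp only [Set.finrank] at h1
    omega
  obtain ⟨v0, hv0, hv0'⟩ : ∃ v0 ∈ V, v0 ∉ Submodule.span ℂ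
      (((Finset.univ.erase i).image (uvec hkn i a) : Finset (CSp n)) : Set (CSp n)) := by
    by_contra hcon
    push Not at hcon
    have := Submodule.finrank_mono (show V ≤ _ from hcon)
    omega
  set s : CSp n := ∑ j ∈ Finset.univ.erase i, v0 (Sum.inl (ixi hkn j)) • uvec hkn i a j with hs
  set v : CSp n := v0 - s with hv
  have hsV : s ∈ V := Submodule.sum_mem _ fun j hj =>
    Submodule.smul_mem _ _ (ha j (Finset.ne_of_mem_erase hj))
  have hvV : v ∈ V := Submodule.sub_mem _ hv0 hsV
  have hvne : v ≠ 0 := by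
    intro h0
    apply hv0'
    rw [sub_eq_zero.1 h0]
    exact Submodule.sum_mem _ fun j hj => Submodule.smul_mem _ _
      (Submodule.subset_span (Finset.mem_coe.2 (Finset.mem_image_of_mem _ hj)))
  have hvl : ∀ j, j ≠ i → v (Sum.inl (ixi hkn j)) = 0 := by
    intro j hj
    have hu : ∀ j' ∈ Finset.univ.erase i, uvec hkn i a j' (Sum.inl (ixi hkn j)) =
        if j' = j then 1 else 0 := by
      intro j' hj'
      have := cols_inl hkn i a j j' hj
      rwa [cols, if_neg (Finset.ne_of_mem_erase hj')] at this
    have : s (Sum.inl (ixi hkn j)) = v0 (Sum.inl (ixi hkn j)) := by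
      rw [hs, WithLp.ofLp_sum, Finset.sum_apply,
        Finset.sum_eq_single_of_mem j (Finset.mem_erase.2 ⟨hj, Finset.mem_univ j⟩)]
      · have := hu j (Finset.mem_erase.2 ⟨hj, Finset.mem_univ j⟩)
        simp [this]
      · intro b hb hbj
        have := hu b hb
        simp [this, hbj]
    simp [hv, this]
  have hvr : ∀ j, j ≠ i → v (Sum.inr (ixi hkn j)) =
      -(a (Sum.inl (ixi hkn j)) * v (Sum.inr (ixi hkn i))) := by
    intro j hj
    have h1 : OmegaB n (uvec hkn i a j) v = 0 := hiso _ (ha j hj) _ hvV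
    rw [omega_uvec] at h1
    exact eq_neg_of_add_eq_zero_left h1
  have hbi : ¬ Bad i (ixi hkn i) := by simp [bad_ixi]
  obtain ⟨m, hm, hvm⟩ : ∃ m : Fin n ⊕ Fin n, ¬ Bad i (Sum.elim id id m) ∧ v m ≠ 0 := by
    by_contra hcon
    push Not at hcon
    apply hvne
    ext c
    by_cases hc : Bad i (Sum.elim id id c)
    · rcases c with c | c
      · obtain ⟨j, hj, rfl⟩ := bad_exists hkn i c hc
        exact hvl j hj
      · obtain ⟨j, hj, rfl⟩ := bad_exists hkn i c hc
        rw [hvr j hj, hcon (Sum.inr (ixi hkn i)) hbi]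
        simp
    · exact hcon c hc
  refine ⟨i, m, Sum.elim (fun l => if Bad i l then a (Sum.inl l) else (v m)⁻¹ * v (Sum.inl l))
    (fun l => if Bad i l then 0 else (v m)⁻¹ * v (Sum.inr l)), hm, ?_, ?_, ?_⟩
  · rcases m with m | m
    · have : ¬ Bad i m := hm
      simp [this, hvm]
    · have : ¬ Bad i m := hm
      simp [this, hvm]
  · intro l hl
    simp [hl]
  · intro j
    unfold cols
    split_ifs with hj
    · convert Submodule.smul_mem V (v m)⁻¹ hvV using 1
      ext c
      rcases c with c | c
      · by_cases hc : Bad i c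
        · obtain ⟨j, hj, rfl⟩ := bad_exists hkn i c hc
          simp [vvec, hc, hvl j hj]
        · simp [vvec, hc]
      · by_cases hc : Bad i c
        · obtain ⟨j, hj, rfl⟩ := bad_exists hkn i c hc
          simp [vvec, hc, hvr j hj, hbi]
          ring
        · simp [vvec, hc]
    · rw [uvec_congr hkn i _ a j (by simp [bad_ixi, hj])]
      exact ha j hj

/-- Normalised coordinates. -/
def TT {k : ℕ} (hkn : k ≤ n) (i : Fin k) (m : Fin n ⊕ Fin n) : Finset (Fin n ⊕ Fin n) :=
  insert m ((Finset.univ.erase i).image fun j => Sum.inr (ixi hkn j))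

theorem card_TT {k : ℕ} (hkn : k ≤ n) (i : Fin k) (m : Fin n ⊕ Fin n)
    (hm : ¬ Bad i (Sum.elim id id m)) : (TT hkn i m).card = k := by
  rw [TT, Finset.card_insert_of_notMem, Finset.card_image_of_injective,
    Finset.card_erase_of_mem (Finset.mem_univ i), Finset.card_fin]
  · have := i.2
    omega
  · intro a b hab
    simpa [ixi_inj] using hab
  · intro hmem
    obtain ⟨j, hj, rfl⟩ := Finset.mem_image.1 hmem
    exact hm ((bad_ixi hkn i j).2 (Finset.ne_of_mem_erase hj))

/-- Parameter space. -/
abbrev Par {k : ℕ} (hkn : k ≤ n) (i : Fin k) (m : Fin n ⊕ Fin n) : Type :=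
  {c : Fin n ⊕ Fin n // c ∉ TT hkn i m} → ℂ

theorem finrank_Par {k : ℕ} (hkn : k ≤ n) (i : Fin k) (m : Fin n ⊕ Fin n)
    (hm : ¬ Bad i (Sum.elim id id m)) : finrank ℝ (Par hkn i m) = 2 * (2 * n - k) := by
  rw [Module.finrank_pi_fintype]
  simp only [Complex.finrank_real_complex, Finset.sum_const, Finset.card_univ, smul_eq_mul]
  rw [Fintype.card_subtype_compl]
  simp [card_TT hkn i m hm]
  omega

/-- Extension of parameters to all coordinates. -/
def extp {k : ℕ} (hkn : k ≤ n) (i : Fin k) (m : Fin n ⊕ Fin n) (x : Par hkn i m)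
    (c : Fin n ⊕ Fin n) : ℂ :=
  if h : c ∉ TT hkn i m then x ⟨c, h⟩ else if c = m then 1 else 0

theorem extp_m {k : ℕ} (hkn : k ≤ n) (i : Fin k) (m : Fin n ⊕ Fin n) (x : Par hkn i m) :
    extp hkn i m x m = 1 := by
  simp [extp, TT]

theorem exists_extp {k : ℕ} (hkn : k ≤ n) (i : Fin k) (m : Fin n ⊕ Fin n)
    (p : Fin n ⊕ Fin n → ℂ) (hp : p m = 1) (hp' : ∀ l, Bad i l → p (Sum.inr l) = 0) :
    extp hkn i m (fun c => p c.1) = p := by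
  ext c
  by_cases h : c ∉ TT hkn i m
  · simp [extp, h]
  · by_cases hc : c = m
    · rw [hc, extp_m, hp]
    · have : extp hkn i m (fun c => p c.1) c = 0 := by simp [extp, h, hc]
      rw [this]
      rw [not_not, TT, Finset.mem_insert] at h
      obtain ⟨j, hj, rfl⟩ := Finset.mem_image.1 (h.resolve_left hc)
      exact (hp' _ ((bad_ixi hkn i j).2 (Finset.ne_of_mem_erase hj))).symm

theorem contDiff_extp {k : ℕ} (hkn : k ≤ n) (i : Fin k) (m c : Fin n ⊕ Fin n) :
    ContDiff ℂ 1 (fun x : Par hkn i m => extp hkn i m x c) := by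
  by_cases h : c ∉ TT hkn i m
  · simp only [extp, h, dif_pos, not_false_eq_true]
    exact contDiff_apply ℂ ℂ _
  · simp only [extp, h, dif_neg, not_false_eq_true]
    exact contDiff_const

theorem contDiff_frame {k : ℕ} (hkn : k ≤ n) (i : Fin k) (m : Fin n ⊕ Fin n) :
    ContDiff ℂ 1 (fun x : Par hkn i m => frame (cols hkn i (extp hkn i m x))) := by
  unfold frame
  refine ContDiff.sum fun j _ => ContDiff.smulRight contDiff_const ?_
  unfold cols
  split_ifs
  · rw [contDiff_euclidean]
    rintro (c | c)
    · simp only [vvec, Sum.elim_inl]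
      split_ifs
      · exact contDiff_const
      · exact contDiff_extp hkn i m _
    · simp only [vvec, Sum.elim_inr]
      split_ifs
      · exact ((contDiff_extp hkn i m _).mul (contDiff_extp hkn i m _)).neg
      · exact contDiff_extp hkn i m _
  · unfold uvec
    exact contDiff_const.add ((contDiff_extp hkn i m _).smul contDiff_const)

/-- Chart. -/
def psi {k : ℕ} (hkn : k ≤ n) (i : Fin k) (m : Fin n ⊕ Fin n) (x : Par hkn i m) :
    CSp n →L[ℂ] CSp n := frameProj (frame (cols hkn i (extp hkn i m x)))

theorem inj_extp {k : ℕ} (hkn : k ≤ n) (i : Fin k) (m : Fin n ⊕ Fin n)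
    (hm : ¬ Bad i (Sum.elim id id m)) (x : Par hkn i m) :
    Function.Injective (frame (cols hkn i (extp hkn i m x))) :=
  frame_injective hkn i _ m hm (by rw [extp_m]; exact one_ne_zero)

theorem contDiff_psi {k : ℕ} (hkn : k ≤ n) (i : Fin k) (m : Fin n ⊕ Fin n)
    (hm : ¬ Bad i (Sum.elim id id m)) : ContDiff ℝ 1 (psi hkn i m) := by
  rw [contDiff_iff_contDiffAt]
  intro x
  exact ContDiffAt.comp (g := frameProj)
    (f := fun x : Par hkn i m => frame (cols hkn i (extp hkn i m x))) x
    (contDiffAt_frameProj _ (inj_extp hkn i m hm x))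
    ((contDiff_frame hkn i m).restrict_scalars ℝ).contDiffAt

theorem Gamma_subset {k : ℕ} (hk : 0 < k) (hkn : k ≤ n) :
    GammaIG n k hkn ⊆ ⋃ q : {q : Fin k × (Fin n ⊕ Fin n) // ¬ Bad q.1 (Sum.elim id id q.2)},
      Set.range (psi hkn q.1.1 q.1.2) := by
  rintro P ⟨h1, h2, h3, h4, h5, -⟩
  obtain ⟨i, m, p, hm, hp, hp', hc⟩ := exists_cols2 hk hkn _ h3 h4 h5
  refine Set.mem_iUnion.2 ⟨⟨(i, m), hm⟩, fun c => p c.1, ?_⟩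
  have hinj := frame_injective hkn i p m hm (by rw [hp]; exact one_ne_zero)
  simp only [psi]
  rw [exists_extp hkn i m p hp hp']
  refine (eq_frameProj _ hinj P h1 h2 ?_).symm
  refine (Submodule.eq_of_le_of_finrank_eq ?_ ?_).symm
  · rw [frame_range, Submodule.span_le]
    rintro _ ⟨j, rfl⟩
    exact hc j
  · rw [h3, LinearMap.finrank_range_of_inj hinj]; simp

theorem upper {k : ℕ} (hk : 0 < k) (hkn : k ≤ n) :
    dimH (GammaIG n k hkn) ≤ (2 * (2 * n - k) : ℕ) := by
  refine (dimH_mono (Gamma_subset hk hkn)).trans ?_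
  rw [dimH_iUnion]
  refine iSup_le fun q => ?_
  rw [← finrank_Par hkn q.1.1 q.1.2 q.2]
  exact (contDiff_psi hkn q.1.1 q.1.2 q.2).dimH_range_le

/-- The reference frame for the lower bound. -/
def refc {k : ℕ} (hkn : k ≤ n) (i : Fin k) (j : Fin k) : CSp n :=
  if j = i then EuclideanSpace.single (Sum.inr (ixi hkn i)) 1
  else EuclideanSpace.single (Sum.inl (ixi hkn j)) 1

theorem adj_ref {k : ℕ} (hkn : k ≤ n) (i : Fin k) (x : Par hkn i (Sum.inr (ixi hkn i))) :
    (ContinuousLinearMap.adjoint (frame (refc hkn i))).comp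
      (frame (cols hkn i (extp hkn i (Sum.inr (ixi hkn i)) x))) =
      ContinuousLinearMap.id ℂ _ := by
  have hm : ¬ Bad i (Sum.elim id id (Sum.inr (ixi hkn i) : Fin n ⊕ Fin n)) := by simp [bad_ixi]
  ext y j
  have h1 : ∀ z : EuclideanSpace ℂ (Fin k), z j = inner ℂ (EuclideanSpace.single j (1 : ℂ)) z := by
    intro z; rw [EuclideanSpace.inner_single_left]; simp
  rw [h1, ContinuousLinearMap.comp_apply, ContinuousLinearMap.adjoint_inner_right, frame_single]
  unfold refc
  split_ifs with hj
  · subst hj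
    simp only [EuclideanSpace.inner_single_left, map_one, one_mul, ContinuousLinearMap.id_apply]
    rw [frame_apply, WithLp.ofLp_sum, Finset.sum_apply, Finset.sum_eq_single j]
    · simp [cols, vvec_good hkn j _ _ hm, extp_m]
    · intro b _ hb
      simp [cols, hb, uvec]
    · simp
  · rw [EuclideanSpace.inner_single_left, frame_inl hkn i _ j hj]; simp

/-- Reading off the parameters. -/
def readPar {k : ℕ} (hkn : k ≤ n) (i : Fin k) (m : Fin n ⊕ Fin n)
    (A : EuclideanSpace ℂ (Fin k) →L[ℂ] CSp n) : Par hkn i m := fun c =>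
  match c.1 with
  | Sum.inl l => if h : Bad i l then A (EuclideanSpace.single ⟨l, h.1⟩ 1) (Sum.inl (ixi hkn i))
      else A (EuclideanSpace.single i 1) (Sum.inl l)
  | Sum.inr l => A (EuclideanSpace.single i 1) (Sum.inr l)

theorem contDiff_readPar {k : ℕ} (hkn : k ≤ n) (i : Fin k) (m : Fin n ⊕ Fin n) :
    ContDiff ℝ 1 (readPar hkn i m) := by
  have key : ∀ (j : Fin k) (c : Fin n ⊕ Fin n), ContDiff ℝ 1
      (fun A : EuclideanSpace ℂ (Fin k) →L[ℂ] CSp n => A (EuclideanSpace.single j 1) c) := by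
    intro j c
    have h1 : ContDiff ℂ 1
      (fun A : EuclideanSpace ℂ (Fin k) →L[ℂ] CSp n => A (EuclideanSpace.single j 1)) :=
      contDiff_id.clm_apply contDiff_const
    exact ((contDiff_euclidean.1 h1) c).restrict_scalars ℝ
  rw [contDiff_pi]
  rintro ⟨c | l, hc⟩
  · by_cases h : Bad i c
    · simpa [readPar, h] using key _ _
    · simpa [readPar, h] using key _ _
  · simpa [readPar] using key _ _

theorem readPar_frame {k : ℕ} (hkn : k ≤ n) (i : Fin k) (m : Fin n ⊕ Fin n) (x : Par hkn i m) :
    readPar hkn i m (frame (cols hkn i (extp hkn i m x))) = x := by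
  ext ⟨c, hc⟩
  have hx : extp hkn i m x c = x ⟨c, hc⟩ := by simp [extp, hc]
  rw [← hx]
  rcases c with l | l
  · by_cases h : Bad i l
    · obtain ⟨j, hj, rfl⟩ := bad_exists hkn i l h
      have hj' : (⟨(ixi hkn j : ℕ), h.1⟩ : Fin k) = j := by simp [ixi]
      simp only [readPar, h, dif_pos, hj', frame_single, cols, hj, if_false]
      simp [uvec, ixi_inj, hj, Ne.symm hj]
    · simp [readPar, h, frame_single, cols, vvec]
  · have hl : ¬ Bad i l := by
      intro h
      obtain ⟨j, hj, rfl⟩ := bad_exists hkn i l h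
      exact hc (Finset.mem_insert_of_mem (Finset.mem_image.2
        ⟨j, Finset.mem_erase.2 ⟨hj, Finset.mem_univ _⟩, rfl⟩))
    simp [readPar, hl, frame_single, cols, vvec]

theorem lower {k : ℕ} (hk : 0 < k) (hkn : k ≤ n) :
    ((2 * (2 * n - k) : ℕ) : ENNReal) ≤ dimH (GammaIG n k hkn) := by
  set i : Fin k := ⟨0, hk⟩
  set m : Fin n ⊕ Fin n := Sum.inr (ixi hkn i) with hmdef
  have hm : ¬ Bad i (Sum.elim id id m) := by simp [hmdef, bad_ixi]
  have hsub : Set.range (psi hkn i m) ⊆ GammaIG n k hkn := by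
    rintro _ ⟨x, rfl⟩
    exact frame_mem_Gamma hkn i _ m hm (by rw [extp_m]; exact one_ne_zero)
  refine le_trans ?_ (dimH_mono hsub)
  set φ : (CSp n →L[ℂ] CSp n) → Par hkn i m :=
    fun P => readPar hkn i m (frameRec (frame (refc hkn i)) P) with hφ
  have himg : φ '' Set.range (psi hkn i m) = Set.univ := by
    rw [Set.eq_univ_iff_forall]
    intro x
    refine ⟨_, ⟨x, rfl⟩, ?_⟩
    simp only [hφ, psi]
    rw [frameRec_frameProj _ _ (inj_extp hkn i m hm x) (adj_ref hkn i x), readPar_frame]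
  rw [← finrank_Par hkn i m hm, ← Real.dimH_univ_eq_finrank, ← himg]
  have : FiniteDimensional ℝ (CSp n →L[ℂ] CSp n) := FiniteDimensional.complexToReal _
  have : ProperSpace (CSp n →L[ℂ] CSp n) := FiniteDimensional.proper ℝ _
  refine dimH_image_le_of_locally_lipschitzOn ?_
  rintro _ ⟨x, rfl⟩
  have hcd : ContDiffAt ℝ 1 φ (psi hkn i m x) :=
    ContDiffAt.comp (g := readPar hkn i m) (f := frameRec (frame (refc hkn i))) _
      (contDiff_readPar hkn i m).contDiffAt
      (contDiffAt_frameRec _ _ (isUnit_frameRec _ _ (inj_extp hkn i m hm x) (adj_ref hkn i x)))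
  obtain ⟨C, t, ht, hC⟩ := hcd.exists_lipschitzOnWith
  exact ⟨C, t, mem_nhdsWithin_of_mem_nhds ht, hC⟩

end Concrete

theorem stmt9 (k : ℕ) (hk : 0 < k) (hkn : k ≤ n) :
    dimH (GammaIG n k hkn) = (2 * (2 * n - k) : ℕ) := by
  exact le_antisymm (upper hk hkn) (lower hk hkn)

end
end

section
/- Let W be a Coxeter group with simple reflections S, let S_P ⊆ S_Q ⊆ S, and let w ∈ W^P with decomposition w = w^Q · w_Q^P (w^Q ∈ W^Q, w_Q^P ∈ W_Q^P). Then the maximal element (in Bruhat order) of the set {v ∈ W^P : v^Q = w^Q} is w^Q · w_q^p, where w_q^p is the longest element of W_Q^P, assuming W_Q is finite. -/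
/-!
STATEMENT 14: Let W be a Coxeter group, S_P ⊆ S_Q (indexed by J ⊆ K), with W_Q
finite, and let w ∈ W^P with factorization w = w^Q · w_Q^P.  Then the maximal
element, in Bruhat order, of {v ∈ W^P : v^Q = w^Q} is w^Q · w_q^p, where w_q^p is
the longest element of W_Q^P.
-/

open CoxeterSystem

variable {B W : Type*} [Group W] {M : CoxeterMatrix B}

/-- The Bruhat order on a Coxeter group: the reflexive-transitive closure of
`a → a·t` where `t` is a reflection and the length increases. -/
def bruhatLE (cs : CoxeterSystem M W) : W → W → Prop :=
  Relation.ReflTransGen fun a b =>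
    ∃ t : W, cs.IsReflection t ∧ b = a * t ∧ cs.length a < cs.length b

open Classical in
/-- The action of a simple reflection on `W × ZMod 2`. -/
noncomputable def etaGen (cs : CoxeterSystem M W) (i : B) : Function.End (W × ZMod 2) :=
  fun p => (cs.simple i * p.1 * cs.simple i, p.2 + if p.1 = cs.simple i then 1 else 0)

open Classical in
theorem etaGen_pow (cs : CoxeterSystem M W) (i j : B) (n : ℕ) (t : W) (e : ZMod 2) :
    ((etaGen cs i * etaGen cs j) ^ n) (t, e) =
      ((cs.simple i * cs.simple j) ^ n * t * ((cs.simple i * cs.simple j) ^ n)⁻¹,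
        e + ∑ k ∈ Finset.range (2 * n),
          if t = cs.simple j * (cs.simple i * cs.simple j) ^ k then 1 else 0) := by
  induction n with
  | zero => simp; rfl
  | succ n ih =>
    have hc : ∀ k : ℕ, (cs.simple i * cs.simple j) ^ k * cs.simple j *
        (cs.simple i * cs.simple j) ^ k = cs.simple j := by
      intro k
      induction k with
      | zero => simp
      | succ k ihk =>
        rw [pow_succ]
        nth_rw 2 [← pow_succ]
        rw [pow_succ']
        calc _ = (cs.simple i * cs.simple j) ^ k * (cs.simple i * (cs.simple j * cs.simple j)
              * cs.simple i) * cs.simple j * (cs.simple i * cs.simple j) ^ k := by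
                simp only [mul_assoc]
          _ = _ := by simpa using ihk
    have h1 : ((etaGen cs i * etaGen cs j) ^ (n+1)) (t, e) = etaGen cs i (etaGen cs j
        (((etaGen cs i * etaGen cs j) ^ n) (t, e))) := by
      rw [pow_succ']; rfl
    rw [h1, ih]
    simp only [etaGen]
    refine Prod.ext ?_ ?_
    · simp only [pow_succ', mul_inv_rev, mul_assoc, cs.inv_simple]
    · simp only
      rw [show 2 * (n + 1) = 2 * n + 1 + 1 by ring, Finset.sum_range_succ, Finset.sum_range_succ,
        add_assoc, add_assoc, add_assoc]
      congr 2
      set x := cs.simple i * cs.simple j with hx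
      have hcn : (x ^ n)⁻¹ * cs.simple j = cs.simple j * x ^ n := by
        rw [inv_mul_eq_iff_eq_mul, ← mul_assoc, hc]
      have e1 : (x ^ n * t * (x ^ n)⁻¹ = cs.simple j) ↔ t = cs.simple j * x ^ (2 * n) := by
        rw [two_mul, pow_add, ← mul_assoc, ← hcn, mul_inv_eq_iff_eq_mul, mul_assoc,
          eq_inv_mul_iff_mul_eq]
      have e2 : (cs.simple j * (x ^ n * t * (x ^ n)⁻¹) * cs.simple j = cs.simple i) ↔
          t = cs.simple j * x ^ (2 * n + 1) := by
        have : cs.simple j * x ^ (2 * n + 1) = (x ^ n)⁻¹ * (cs.simple j * cs.simple i * cs.simple j)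
            * x ^ n := by
          rw [show 2 * n + 1 = n + 1 + n by ring, pow_add, pow_add, ← mul_assoc, ← mul_assoc, ← hcn,
            hx]
          simp only [pow_one, mul_assoc]
        rw [this]
        constructor
        · intro h
          rw [← h]
          simp [mul_assoc]
        · intro h
          rw [h]
          simp [mul_assoc]
      simp only [e1, e2]

theorem etaGen_liftable (cs : CoxeterSystem M W) : M.IsLiftable (etaGen cs) := by
  classical
  intro i j
  funext ⟨t, e⟩
  rw [etaGen_pow, cs.simple_mul_simple_pow, two_mul, Finset.sum_range_add]
  simp only [pow_add, cs.simple_mul_simple_pow, one_mul, CharTwo.add_self_eq_zero]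
  simp
  rfl

/-- The reflection cocycle representation. -/
noncomputable def etaHom (cs : CoxeterSystem M W) : W →* Function.End (W × ZMod 2) :=
  cs.lift ⟨etaGen cs, etaGen_liftable cs⟩

open Classical in
theorem etaHom_word (cs : CoxeterSystem M W) (ω : List B) (t : W) (e : ZMod 2) :
    etaHom cs (cs.wordProd ω) (t, e) =
      (cs.wordProd ω * t * (cs.wordProd ω)⁻¹, e + ((cs.rightInvSeq ω).count t : ℕ)) := by
  induction ω with
  | nil => simp; rfl
  | cons i ω ih =>
    have h1 : etaHom cs (cs.wordProd (i :: ω)) (t, e) =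
        etaGen cs i (etaHom cs (cs.wordProd ω) (t, e)) := by
      rw [cs.wordProd_cons, map_mul]
      simp only [etaHom, cs.lift_apply_simple]
      rfl
    rw [h1, ih]
    simp only [etaGen, rightInvSeq, cs.wordProd_cons]
    refine Prod.ext ?_ ?_
    · simp [mul_assoc]
    · simp only [List.count_cons]
      have : ((cs.wordProd ω)⁻¹ * cs.simple i * cs.wordProd ω = t) ↔
          cs.wordProd ω * t * (cs.wordProd ω)⁻¹ = cs.simple i := by
        constructor
        · rintro rfl; simp [mul_assoc]
        · intro h; rw [← h]; simp [mul_assoc]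
      simp [this, add_assoc]

/-- The reflection cocycle. -/
noncomputable def eta (cs : CoxeterSystem M W) (w t : W) : ZMod 2 := (etaHom cs w (t, 0)).2

theorem etaHom_apply (cs : CoxeterSystem M W) (w t : W) (e : ZMod 2) :
    etaHom cs w (t, e) = (w * t * w⁻¹, e + eta cs w t) := by
  obtain ⟨ω, rfl⟩ := cs.wordProd_surjective w
  simp [eta, etaHom_word]

theorem eta_mul (cs : CoxeterSystem M W) (a b t : W) :
    eta cs (a * b) t = eta cs b t + eta cs a (b * t * b⁻¹) := by
  have : etaHom cs (a * b) (t, 0) = etaHom cs a (etaHom cs b (t, 0)) := by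
    rw [map_mul]; rfl
  simp [etaHom_apply] at this
  exact this.2

theorem eta_one (cs : CoxeterSystem M W) (t : W) : eta cs 1 t = 0 := by
  have := eta_mul cs 1 1 t
  simpa using this

theorem eta_simple (cs : CoxeterSystem M W) (i : B) : eta cs (cs.simple i) (cs.simple i) = 1 := by
  classical
  have := etaHom_word cs [i] (cs.simple i) 0
  simp [etaHom_apply] at this
  exact this

theorem eta_refl (cs : CoxeterSystem M W) (t : W) (ht : cs.IsReflection t) : eta cs t t = 1 := by
  obtain ⟨u, i, rfl⟩ := ht
  have h := eta_mul cs u⁻¹ u (cs.simple i)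
  rw [inv_mul_cancel, eta_one] at h
  rw [eta_mul cs (u * cs.simple i) u⁻¹, eta_mul cs u (cs.simple i)]
  have h1 : u⁻¹ * (u * cs.simple i * u⁻¹) * u⁻¹⁻¹ = cs.simple i := by simp [mul_assoc]
  rw [h1]
  simp only [mul_inv_cancel_right, eta_simple]
  linear_combination -h

theorem mem_ris_of_eta (cs : CoxeterSystem M W) (ω : List B) (t : W)
    (h : eta cs (cs.wordProd ω) t ≠ 0) : t ∈ cs.rightInvSeq ω := by
  classical
  by_contra hn
  apply h
  simp [eta, etaHom_word, List.count_eq_zero_of_not_mem hn]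

theorem lt_of_eta (cs : CoxeterSystem M W) (w t : W) (h : eta cs w t ≠ 0) :
    cs.length (w * t) < cs.length w := by
  obtain ⟨ω, hω, rfl⟩ := cs.exists_isReduced w
  exact (cs.isRightInversion_of_mem_rightInvSeq hω (mem_ris_of_eta cs ω t h)).2

theorem eta_iff (cs : CoxeterSystem M W) (w t : W) (ht : cs.IsReflection t) :
    cs.length (w * t) < cs.length w ↔ eta cs w t ≠ 0 := by
  refine ⟨fun h h0 => ?_, lt_of_eta cs w t⟩
  have h1 : eta cs (w * t) t ≠ 0 := by
    rw [eta_mul, eta_refl cs t ht]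
    simp [h0]
  have := lt_of_eta cs _ _ h1
  rw [mul_assoc, ht.mul_self, mul_one] at this
  omega

theorem inv_key (cs : CoxeterSystem M W) (a b t : W) (ht : cs.IsReflection t) :
    cs.length (a * b * t) < cs.length (a * b) ↔
      (cs.length (b * t) < cs.length b ↔
        ¬ cs.length (a * (b * t * b⁻¹)) < cs.length a) := by
  rw [eta_iff cs _ _ ht, eta_iff cs _ _ ht, eta_iff cs _ _ (ht.conj b), eta_mul]
  generalize eta cs b t = x
  generalize eta cs a (b * t * b⁻¹) = y
  revert x y
  decide

/-- Elements of a standard parabolic subgroup have reduced words in the subset. -/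
theorem exists_reduced_in (cs : CoxeterSystem M W) (K : Set B) (c : W)
    (hc : c ∈ Subgroup.closure (cs.simple '' K)) :
    ∃ ω : List B, cs.IsReduced ω ∧ c = cs.wordProd ω ∧ ∀ i ∈ ω, i ∈ K := by
  have step : ∀ x : W, ∀ i ∈ K,
      (∃ ω : List B, cs.IsReduced ω ∧ x = cs.wordProd ω ∧ ∀ i ∈ ω, i ∈ K) →
      ∃ ω : List B, cs.IsReduced ω ∧ x * cs.simple i = cs.wordProd ω ∧ ∀ i ∈ ω, i ∈ K := by
    rintro x i hi ⟨ω, hω, rfl, hK⟩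
    rcases cs.length_mul_simple (cs.wordProd ω) i with h | h
    · refine ⟨ω ++ [i], ?_, by simp [cs.wordProd_append], ?_⟩
      · unfold CoxeterSystem.IsReduced
        rw [cs.wordProd_append, cs.wordProd_singleton, h, hω.eq]
        simp
      · intro k hk
        rcases List.mem_append.1 hk with hk | hk
        · exact hK k hk
        · rw [List.mem_singleton.1 hk]; exact hi
    · have h1 := mem_ris_of_eta cs ω _
        ((eta_iff cs _ _ (cs.isReflection_simple i)).1 (by omega : _ < _))
      obtain ⟨j, hj, he⟩ := List.mem_iff_getElem.1 h1
      have h2 := cs.wordProd_mul_getD_rightInvSeq ω j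
      rw [List.getD_eq_getElem _ _ hj, he] at h2
      refine ⟨ω.eraseIdx j, ?_, h2, fun k hk => hK k (List.mem_of_mem_eraseIdx hk)⟩
      unfold CoxeterSystem.IsReduced
      rw [← h2]
      have h3 := hω.eq
      rw [cs.length_rightInvSeq] at hj
      rw [List.length_eraseIdx_of_lt hj]
      omega
  induction hc using Subgroup.closure_induction_right with
  | one => exact ⟨[], by simp [CoxeterSystem.IsReduced], by simp, by simp⟩
  | mul_right x hx y hy ih =>
    obtain ⟨i, hi, rfl⟩ := hy
    exact step x i hi ih
  | mul_inv_cancel x hx y hy ih =>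
    obtain ⟨i, hi, rfl⟩ := hy
    rw [cs.inv_simple]
    exact step x i hi ih

theorem eq_one_of_no_descent (cs : CoxeterSystem M W) (K : Set B) (c : W)
    (hc : c ∈ Subgroup.closure (cs.simple '' K))
    (h : ∀ i ∈ K, cs.length c < cs.length (c * cs.simple i)) : c = 1 := by
  obtain ⟨ω, hω, rfl, hK⟩ := exists_reduced_in cs K c hc
  rcases List.eq_nil_or_concat ω with rfl | ⟨ω', i, rfl⟩
  · simp
  · exfalso
    have h1 := h i (hK i (by simp))
    have h3 := hω.eq
    rw [List.concat_eq_append] at h3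
    rw [cs.wordProd_concat, cs.simple_mul_simple_cancel_right, ← cs.wordProd_concat,
      List.concat_eq_append, h3] at h1
    have h2 := cs.length_wordProd_le ω'
    simp at h1
    omega

theorem simple_mem (cs : CoxeterSystem M W) {K : Set B} {i : B} (hi : i ∈ K) :
    cs.simple i ∈ Subgroup.closure (cs.simple '' K) :=
  Subgroup.subset_closure ⟨i, hi, rfl⟩

/-- Right induction over a standard parabolic subgroup. -/
theorem para_induction (cs : CoxeterSystem M W) (K : Set B) {p : W → Prop} (h1 : p 1)
    (hs : ∀ x ∈ Subgroup.closure (cs.simple '' K), ∀ i ∈ K, p x → p (x * cs.simple i)) (c : W)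
    (hc : c ∈ Subgroup.closure (cs.simple '' K)) : p c := by
  induction hc using Subgroup.closure_induction_right with
  | one => exact h1
  | mul_right x hx y hy ih =>
    obtain ⟨i, hi, rfl⟩ := hy
    exact hs x hx i hi ih
  | mul_inv_cancel x hx y hy ih =>
    obtain ⟨i, hi, rfl⟩ := hy
    rw [cs.inv_simple]
    exact hs x hx i hi ih

theorem length_add_of_min (cs : CoxeterSystem M W) (K : Set B) (a : W)
    (ha : ∀ t ∈ Subgroup.closure (cs.simple '' K), cs.length a ≤ cs.length (a * t)) (b : W)
    (hb : b ∈ Subgroup.closure (cs.simple '' K)) :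
    cs.length (a * b) = cs.length a + cs.length b := by
  refine para_induction cs K (p := fun b => cs.length (a * b) = cs.length a + cs.length b)
    (by simp) ?_ b hb
  intro x hx i hi ih
  have hle := cs.length_mul_le a (x * cs.simple i)
  rw [← mul_assoc] at hle ⊢
  rcases cs.length_mul_simple x i with h | h
  · have hk := inv_key cs a x _ (cs.isReflection_simple i)
    have h2 := ha (x * cs.simple i * x⁻¹)
      (mul_mem (mul_mem hx (simple_mem cs hi)) (inv_mem hx))
    rcases cs.length_mul_simple (a * x) i with h3 | h3
    · omega
    · have h4 := hk.1 (by omega)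
      omega
  · rcases cs.length_mul_simple (a * x) i with h3 | h3 <;> omega

theorem length_add (cs : CoxeterSystem M W) (K : Set B) (a : W)
    (ha : ∀ i ∈ K, cs.length a < cs.length (a * cs.simple i)) (b : W)
    (hb : b ∈ Subgroup.closure (cs.simple '' K)) :
    cs.length (a * b) = cs.length a + cs.length b := by
  obtain ⟨c, hc, hmin⟩ := WellFounded.has_min (measure (fun c : W => cs.length (a * c))).wf
    ((Subgroup.closure (cs.simple '' K) : Subgroup W) : Set W) ⟨1, one_mem _⟩
  have hc' : c ∈ Subgroup.closure (cs.simple '' K) := hc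
  have hm : ∀ t ∈ Subgroup.closure (cs.simple '' K),
      cs.length (a * c) ≤ cs.length (a * c * t) := by
    intro t ht
    have : ¬ cs.length (a * (c * t)) < cs.length (a * c) := hmin (c * t) (mul_mem hc' ht)
    rw [← mul_assoc] at this
    exact not_lt.1 this
  have hadd := length_add_of_min cs K (a * c) hm
  have h1 : c⁻¹ = 1 := by
    apply eq_one_of_no_descent cs K _ (inv_mem hc')
    intro i hi
    have h2 := hadd _ (inv_mem hc')
    have h3 := hadd _ (mul_mem (inv_mem hc') (simple_mem cs hi))
    rw [mul_inv_cancel_right] at h2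
    rw [← mul_assoc, mul_inv_cancel_right] at h3
    have := ha i hi
    omega
  have h2 : c = 1 := inv_eq_one.1 h1
  subst h2
  simpa using hadd b hb

theorem longest_sub (cs : CoxeterSystem M W) (K : Set B) (z : W)
    (hz : z ∈ Subgroup.closure (cs.simple '' K))
    (hmax : ∀ t ∈ Subgroup.closure (cs.simple '' K), cs.length t ≤ cs.length z) (u : W)
    (hu : u ∈ Subgroup.closure (cs.simple '' K)) :
    cs.length (z * u) + cs.length u = cs.length z := by
  refine para_induction cs K (p := fun u => cs.length (z * u) + cs.length u = cs.length z)
    (by simp) ?_ u hu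
  intro x hx i hi ih
  have hle := cs.length_le_length_mul_add_right z (x * cs.simple i)
  rw [← mul_assoc] at hle ⊢
  rcases cs.length_mul_simple x i with h | h
  · have hk := inv_key cs z x _ (cs.isReflection_simple i)
    have h2 := hmax (z * (x * cs.simple i * x⁻¹))
      (mul_mem hz (mul_mem (mul_mem hx (simple_mem cs hi)) (inv_mem hx)))
    have h5 := ((cs.isReflection_simple i).conj x).length_mul_left_ne z
    have h4 := hk.2 (by omega)
    rcases cs.length_mul_simple (z * x) i with h3 | h3 <;> omega
  · rcases cs.length_mul_simple (z * x) i with h3 | h3 <;> omega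

theorem longest_unique (cs : CoxeterSystem M W) (K : Set B) (z : W)
    (hz : z ∈ Subgroup.closure (cs.simple '' K))
    (hmax : ∀ t ∈ Subgroup.closure (cs.simple '' K), cs.length t ≤ cs.length z) (y : W)
    (hy : y ∈ Subgroup.closure (cs.simple '' K))
    (hd : ∀ i ∈ K, cs.length (y * cs.simple i) < cs.length y) : y = z := by
  have hm : z⁻¹ * y ∈ Subgroup.closure (cs.simple '' K) := mul_mem (inv_mem hz) hy
  have h1 : z⁻¹ * y = 1 := by
    apply eq_one_of_no_descent cs K _ hm
    intro i hi
    have h2 := longest_sub cs K z hz hmax _ hm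
    have h3 := longest_sub cs K z hz hmax _ (mul_mem hm (simple_mem cs hi))
    rw [mul_inv_cancel_left] at h2
    rw [mul_assoc, mul_inv_cancel_left, ← mul_assoc] at h3
    have := hd i hi
    omega
  exact (inv_mul_eq_one.1 h1).symm

/-- An element of `W_K^J` which cannot be increased by left multiplication is determined. -/
theorem stuck_eq (cs : CoxeterSystem M W) (J K : Set B) (hJK : J ⊆ K) (z u : W)
    (hz : z ∈ Subgroup.closure (cs.simple '' K))
    (hzmax : ∀ t ∈ Subgroup.closure (cs.simple '' K), cs.length t ≤ cs.length z)
    (hu : u ∈ Subgroup.closure (cs.simple '' J))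
    (humax : ∀ t ∈ Subgroup.closure (cs.simple '' J), cs.length t ≤ cs.length u)
    (b : W) (hb : b ∈ Subgroup.closure (cs.simple '' K))
    (hmin : ∀ i ∈ J, cs.length b < cs.length (b * cs.simple i))
    (hstuck : ∀ i ∈ K, cs.length b < cs.length (cs.simple i * b) →
      ¬ ∀ j ∈ J, cs.length (cs.simple i * b) < cs.length (cs.simple i * b * cs.simple j)) :
    b = z⁻¹ * u⁻¹ := by
  have huK : u ∈ Subgroup.closure (cs.simple '' K) :=
    Subgroup.closure_mono (Set.image_mono hJK) hu
  have hadd := length_add cs J b hmin u hu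
  have h1 : (b * u)⁻¹ = z := by
    apply longest_unique cs K z hz hzmax _ (inv_mem (mul_mem hb huK))
    intro i hi
    rw [← cs.inv_simple i, ← mul_inv_rev, cs.length_inv, cs.length_inv, ← mul_assoc]
    rcases cs.length_simple_mul b i with h | h
    · have h2 := hstuck i hi (by omega)
      push Not at h2
      obtain ⟨j, hj, h3⟩ := h2
      have h4 := cs.length_mul_simple_ne (cs.simple i * b) j
      have h5 := (inv_key cs (cs.simple i) b _ (cs.isReflection_simple j)).1 (by omega)
      have h6 := hmin j hj
      have h7 : cs.length (cs.simple i * (b * cs.simple j * b⁻¹)) = 0 := by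
        have := cs.length_simple i
        omega
      rw [cs.length_eq_zero_iff] at h7
      have h8 : cs.simple i * b = b * cs.simple j := by
        have : cs.simple i = (b * cs.simple j * b⁻¹) := by
          rw [← inv_eq_of_mul_eq_one_right h7, cs.inv_simple]
        rw [this, inv_mul_cancel_right]
      rw [h8, hadd, mul_assoc]
      have h9 := cs.length_mul_le b (cs.simple j * u)
      have h10 := humax _ (mul_mem (simple_mem cs hj) hu)
      have h11 := cs.length_simple_mul_ne u j
      omega
    · have := cs.length_mul_le (cs.simple i * b) u
      omega
  rw [← h1]
  simp

theorem exists_longest (cs : CoxeterSystem M W) (H : Subgroup W) (h : (H : Set W).Finite) :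
    ∃ z ∈ H, ∀ t ∈ H, cs.length t ≤ cs.length z := by
  obtain ⟨z, hz, hm⟩ := Set.exists_max_image (H : Set W) cs.length h ⟨1, one_mem H⟩
  exact ⟨z, hz, hm⟩

theorem stmt14 (cs : CoxeterSystem M W) (J K : Set B) (hJK : J ⊆ K)
    (hfin : ((Subgroup.closure (cs.simple '' K) : Subgroup W) : Set W).Finite)
    (w wQ wQP : W)
    (hw : ∀ i ∈ J, cs.length w < cs.length (w * cs.simple i))
    (hwQ : ∀ i ∈ K, cs.length wQ < cs.length (wQ * cs.simple i))
    (hwQP_mem : wQP ∈ Subgroup.closure (cs.simple '' K))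
    (hwQP_min : ∀ i ∈ J, cs.length wQP < cs.length (wQP * cs.simple i))
    (hfact : w = wQ * wQP)
    (hlen : cs.length w = cs.length wQ + cs.length wQP)
    (wqp : W) (hwqp_mem : wqp ∈ Subgroup.closure (cs.simple '' K))
    (hwqp_min : ∀ i ∈ J, cs.length wqp < cs.length (wqp * cs.simple i))
    (hwqp_long : ∀ v ∈ Subgroup.closure (cs.simple '' K),
      (∀ i ∈ J, cs.length v < cs.length (v * cs.simple i)) →
        cs.length v ≤ cs.length wqp) :
    -- the set {v ∈ W^P : v^Q = w^Q}:
    letI Z : Set W := {v | (∀ i ∈ J, cs.length v < cs.length (v * cs.simple i)) ∧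
      ∃ b : W, b ∈ Subgroup.closure (cs.simple '' K) ∧
        (∀ i ∈ J, cs.length b < cs.length (b * cs.simple i)) ∧
        v = wQ * b ∧ cs.length v = cs.length wQ + cs.length b}
    wQ * wqp ∈ Z ∧ ∀ v ∈ Z, bruhatLE cs v (wQ * wqp) := by
  obtain ⟨z, hz, hzmax⟩ := exists_longest cs _ hfin
  obtain ⟨u, hu, humax⟩ := exists_longest cs (Subgroup.closure (cs.simple '' J))
    (hfin.subset (Subgroup.closure_mono (Set.image_mono hJK)))
  have hadd := length_add cs K wQ hwQ
  have hlast := stuck_eq cs J K hJK z u hz hzmax hu humax wqp hwqp_mem hwqp_min (by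
    intro i hi h1 h2
    have := hwqp_long _ (mul_mem (simple_mem cs hi) hwqp_mem) h2
    omega)
  refine ⟨⟨?_, wqp, hwqp_mem, hwqp_min, rfl, hadd _ hwqp_mem⟩, ?_⟩
  · intro i hi
    rw [mul_assoc, hadd _ hwqp_mem, hadd _ (mul_mem hwqp_mem (simple_mem cs (hJK hi)))]
    have := hwqp_min i hi
    omega
  · rintro v ⟨-, b, hb, hbmin, rfl, -⟩
    induction hn : cs.length wqp - cs.length b using Nat.strong_induction_on generalizing b with
    | _ n ih =>
      by_cases hstuck : ∀ i ∈ K, cs.length b < cs.length (cs.simple i * b) →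
          ¬ ∀ j ∈ J, cs.length (cs.simple i * b) < cs.length (cs.simple i * b * cs.simple j)
      · rw [stuck_eq cs J K hJK z u hz hzmax hu humax b hb hbmin hstuck, ← hlast]
        exact Relation.ReflTransGen.refl
      · push Not at hstuck
        obtain ⟨i, hi, h1, h2⟩ := hstuck
        have hm := mul_mem (simple_mem cs hi) hb
        have h3 := hwqp_long _ hm h2
        refine Relation.ReflTransGen.head ?_ (ih _ (by omega) (cs.simple i * b) hm h2 rfl)
        refine ⟨b⁻¹ * cs.simple i * b, ?_, by simp [mul_assoc], ?_⟩
        · simpa using (cs.isReflection_simple i).conj b⁻¹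
        · rw [hadd _ hb, hadd _ hm]
          omega
end
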